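/- Let s and t be integers with 2 ≤ s ≤ t. There exists a constant C > 0 (depending only on s and t) such that the following holds. Let G be a K_{1,s,t}-free simple graph on n vertices, let S and W be disjoint sets of vertices of G such that every vertex of S is adjacent to every vertex of W, and let A denote the set of vertices v of G with |Γ(v) ∩ S| < s. Then the number of ordered triples (a, b, c) of pairwise adjacent vertices of G with a ∈ S, b ∈ W and c ∈ A is at most C · (n^{1 - 1/s} · |S|^{1/s} · |W| + n). -/

import Mathlib

/-!
For `a ∈ S` let `N a = Γ(a) ∩ A`. The number of triples is the sum of `d(c) = |Γ(c) ∩ W|` over the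
set `P` of pairs `(a, c)` with `a ∈ S` and `c ∈ N a`. By definition of `A`, every `c` lies in fewer
than `s` pairs, so `|P| ≤ s n`. Since `W` and `N a` both lie in the neighbourhood of `a`, there is
no `K_{s,t}` between them with its `s`-set in `W`, and the Kővári–Sós–Turán double count gives
`∑_{c ∈ N a} (d(c) choose s) ≤ t (|W| choose s)` (`sum_choose_le`), hence
`∑_{c ∈ N a} (d(c) + 1 - s)^s ≤ t |W|^s` (`sum_pow_le`). Summing this over `a ∈ S` and applying the
power mean inequality once over all of `P` yields
`(∑_P (d(c) + 1 - s))^s ≤ (s n)^(s-1) · |S| · t · |W|^s`, which is the first term of the bound;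
replacing `d(c)` by the truncated difference `d(c) + 1 - s` loses at most `s |P| ≤ s² n`.
-/

/-- `G` is `K_{1,s,t}`-free. -/
def K1stFree {V : Type*} (G : SimpleGraph V) (s t : ℕ) : Prop :=
  ¬ ∃ (v : V) (S T : Finset V), Disjoint S T ∧ v ∉ S ∧ v ∉ T ∧
      S.card = s ∧ T.card = t ∧
      (∀ x ∈ S, G.Adj v x) ∧ (∀ y ∈ T, G.Adj v y) ∧
      ∀ x ∈ S, ∀ y ∈ T, G.Adj x y

open Finset in
/-- Kővári–Sós–Turán double count of pairs `(c, Q)` with `c ∈ N` and `Q` an `s`-subset of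
`Γ(c) ∩ W`: each `Q` has at most `t` common neighbours in `N`, as `N` and `W` lie in `Γ(a)`. -/
lemma sum_choose_le {V : Type} [Fintype V] [DecidableEq V] (G : SimpleGraph V)
    [DecidableRel G.Adj] (s t : ℕ) (hG : K1stFree G s t) (a : V) (N W : Finset V)
    (hN : ∀ c ∈ N, G.Adj a c) (hW : ∀ b ∈ W, G.Adj a b) :
    ∑ c ∈ N, (W.filter (G.Adj c)).card.choose s ≤ t * W.card.choose s := by
  have h1 : ∀ c ∈ N, (W.filter (G.Adj c)).card.choose s =
      ((powersetCard s W).bipartiteAbove (fun c Q => ∀ q ∈ Q, G.Adj c q) c).card := by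
    intro c _
    rw [← card_powersetCard]
    congr 1
    ext Q
    simp only [mem_powersetCard, bipartiteAbove, mem_filter, subset_iff]
    grind
  rw [sum_congr rfl h1, sum_card_bipartiteAbove_eq_sum_card_bipartiteBelow, mul_comm,
    ← card_powersetCard, ← smul_eq_mul]
  refine sum_le_card_nsmul _ _ _ fun Q hQ => ?_
  rw [mem_powersetCard] at hQ
  by_contra! hlt
  obtain ⟨T, hT, hTc⟩ := exists_subset_card_eq hlt.le
  have hT' : ∀ y ∈ T, y ∈ N ∧ ∀ q ∈ Q, G.Adj y q := fun y hy => by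
    simpa [bipartiteBelow] using hT hy
  refine hG ⟨a, Q, T, ?_, ?_, ?_, hQ.2, hTc, fun x hx => hW x (hQ.1 hx),
    fun y hy => hN y (hT' y hy).1, fun x hx y hy => ((hT' y hy).2 x hx).symm⟩
  · rw [disjoint_left]
    exact fun x hx hx' => G.irrefl ((hT' x hx').2 x hx)
  · exact fun h => G.irrefl (hW a (hQ.1 h))
  · exact fun h => G.irrefl (hN a (hT' a h).1)

open Finset in
lemma sum_pow_le {V : Type} [Fintype V] [DecidableEq V] (G : SimpleGraph V)
    [DecidableRel G.Adj] (s t : ℕ) (hG : K1stFree G s t) (a : V) (N W : Finset V)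
    (hN : ∀ c ∈ N, G.Adj a c) (hW : ∀ b ∈ W, G.Adj a b) :
    ∑ c ∈ N, ((W.filter (G.Adj c)).card + 1 - s) ^ s ≤ t * W.card ^ s := by
  calc ∑ c ∈ N, ((W.filter (G.Adj c)).card + 1 - s) ^ s
      ≤ ∑ c ∈ N, s.factorial * (W.filter (G.Adj c)).card.choose s := by
        refine sum_le_sum fun c _ => ?_
        rw [← Nat.descFactorial_eq_factorial_mul_choose]
        exact Nat.pow_sub_le_descFactorial _ _
    _ = s.factorial * ∑ c ∈ N, (W.filter (G.Adj c)).card.choose s := by rw [mul_sum]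
    _ ≤ s.factorial * (t * W.card.choose s) :=
        Nat.mul_le_mul_left _ (sum_choose_le G s t hG a N W hN hW)
    _ = t * W.card.descFactorial s := by
        rw [Nat.descFactorial_eq_factorial_mul_choose]; ring
    _ ≤ t * W.card ^ s := Nat.mul_le_mul_left _ (Nat.descFactorial_le_pow _ _)

/-- Extraction of `s`-th roots from the power mean estimate. -/
lemma le_of_pow_bound (s X K n m w : ℕ) (hs : 1 ≤ s)
    (h : X ^ s ≤ K ^ s * (n ^ (s - 1) * m * w ^ s)) :
    (X : ℝ) ≤ K * ((n : ℝ) ^ ((1 : ℝ) - 1 / s) * (m : ℝ) ^ ((1 : ℝ) / s) * w) := by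
  have hs0 : (s : ℝ) ≠ 0 := by positivity
  refine le_of_pow_le_pow_left₀ (n := s) (by omega) (by positivity) ?_
  have e1 : ((n : ℝ) ^ ((1 : ℝ) - 1 / s)) ^ s = (n : ℝ) ^ (s - 1) := by
    rw [← Real.rpow_natCast, ← Real.rpow_mul (by positivity), ← Real.rpow_natCast]
    congr 1
    push_cast [Nat.cast_sub hs]
    field_simp
  have e2 : ((m : ℝ) ^ ((1 : ℝ) / s)) ^ s = m := by
    rw [← Real.rpow_natCast, ← Real.rpow_mul (by positivity)]
    field_simp
    simp
  rw [mul_pow, mul_pow, mul_pow, e1, e2]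
  exact_mod_cast h

open Finset in
theorem stmt5 (s t : ℕ) (hs : 2 ≤ s) (hst : s ≤ t) :
    ∃ C : ℝ, 0 < C ∧ ∀ (V : Type) [Fintype V] (G : SimpleGraph V),
      K1stFree G s t →
      ∀ S W : Finset V, Disjoint S W → (∀ x ∈ S, ∀ y ∈ W, G.Adj x y) →
        ∀ A : Set V, A = {v : V | (G.neighborSet v ∩ ↑S).ncard < s} →
        ({p : V × V × V | p.1 ∈ S ∧ p.2.1 ∈ W ∧ p.2.2 ∈ A ∧
            G.Adj p.1 p.2.1 ∧ G.Adj p.2.1 p.2.2 ∧ G.Adj p.2.2 p.1}.ncard : ℝ) ≤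
          C * ((Fintype.card V : ℝ) ^ ((1 : ℝ) - 1 / s) * (S.card : ℝ) ^ ((1 : ℝ) / s)
              * W.card + Fintype.card V) := by
  refine ⟨s * t + s * s, by positivity, ?_⟩
  intro V _ G hG S W _ hSW A hA
  classical
  set n := Fintype.card V with hn
  let N : V → Finset V := fun a => univ.filter fun c => c ∈ A ∧ G.Adj a c
  let d : V → ℕ := fun c => (W.filter (G.Adj c)).card
  let P : Finset (Σ _ : V, V) := S.sigma N
  have hP : P.card ≤ s * n := by
    have : P.card ≤ s * (univ : Finset V).card := by
      refine card_le_mul_card_image_of_maps_to (f := fun p => p.2) (fun _ _ => mem_univ _) s ?_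
      intro c _
      by_cases hc : c ∈ A
      · have hc' := hc
        rw [hA, Set.mem_ofPred_eq] at hc'
        have e : (G.neighborSet c ∩ ↑S) = ↑(S.filter (G.Adj c)) := by
          ext x; simp [and_comm]
        rw [e, Set.ncard_coe_finset] at hc'
        refine le_trans (card_le_card_of_injOn (fun p => p.1) ?_ ?_) hc'.le
        · rintro ⟨a, c'⟩ h
          simp only [P, N, coe_filter, mem_sigma, mem_filter, mem_univ, true_and,
            Set.mem_ofPred_eq] at h ⊢
          obtain ⟨⟨h1, -, h2⟩, rfl⟩ := h
          exact ⟨h1, h2.symm⟩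
        · rintro ⟨a, c'⟩ h ⟨a', c''⟩ h' heq
          simp only [coe_filter, Set.mem_ofPred_eq] at h h' heq
          obtain ⟨-, rfl⟩ := h
          obtain ⟨-, rfl⟩ := h'
          subst heq
          rfl
      · rw [filter_eq_empty_iff.2]
        · simp
        · rintro ⟨a, c'⟩ h rfl
          simp only [P, N, mem_sigma, mem_filter] at h
          exact hc h.2.2.1
    simpa [hn] using this
  have hcount : {p : V × V × V | p.1 ∈ S ∧ p.2.1 ∈ W ∧ p.2.2 ∈ A ∧
      G.Adj p.1 p.2.1 ∧ G.Adj p.2.1 p.2.2 ∧ G.Adj p.2.2 p.1}.ncard ≤ ∑ p ∈ P, d p.2 := by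
    let Q : Finset (Σ _ : (Σ _ : V, V), V) := P.sigma fun p => W.filter (G.Adj p.2)
    have hQ : Q.card = ∑ p ∈ P, d p.2 := card_sigma _ _
    rw [← hQ]
    refine le_trans (Set.ncard_le_ncard
      (t := ↑(Q.image fun q => (q.1.1, q.2, q.1.2))) ?_ (finite_toSet _)) ?_
    · rintro ⟨a, b, c⟩ ⟨h1, h2, h3, -, h5, h6⟩
      rw [mem_coe, mem_image]
      refine ⟨⟨⟨a, c⟩, b⟩, ?_, rfl⟩
      simp only [Q, P, N, mem_sigma, mem_filter, mem_univ, true_and]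
      exact ⟨⟨h1, h3, h6.symm⟩, h2, h5.symm⟩
    · rw [Set.ncard_coe_finset]
      exact card_image_le
  have hpow : ∑ p ∈ P, (d p.2 + 1 - s) ^ s ≤ S.card * (t * W.card ^ s) := by
    rw [sum_sigma, ← smul_eq_mul]
    refine sum_le_card_nsmul _ _ _ fun a ha => ?_
    exact sum_pow_le G s t hG a (N a) W (fun c hc => (mem_filter.1 hc).2.2) (hSW a ha)
  set X := ∑ p ∈ P, (d p.2 + 1 - s) with hX
  have hmean : X ^ s ≤ P.card ^ (s - 1) * ∑ p ∈ P, (d p.2 + 1 - s) ^ s := by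
    obtain ⟨k, rfl⟩ : ∃ k, s = k + 1 := ⟨s - 1, by omega⟩
    exact pow_sum_le_card_mul_sum_pow (fun _ _ => Nat.zero_le _) k
  have hXs : X ^ s ≤ (s * t) ^ s * (n ^ (s - 1) * S.card * W.card ^ s) := by
    have hst' : s ^ (s - 1) * t ≤ (s * t) ^ s := by
      rw [mul_pow]
      exact Nat.mul_le_mul (Nat.pow_le_pow_right (by omega) (by omega))
        (Nat.le_self_pow (by omega) t)
    calc X ^ s ≤ (s * n) ^ (s - 1) * (S.card * (t * W.card ^ s)) :=
          hmean.trans (Nat.mul_le_mul (Nat.pow_le_pow_left hP _) hpow)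
      _ = s ^ (s - 1) * t * (n ^ (s - 1) * S.card * W.card ^ s) := by rw [mul_pow]; ring
      _ ≤ _ := Nat.mul_le_mul_right _ hst'
  have hroot := le_of_pow_bound s X (s * t) n S.card W.card (by omega) hXs
  have hsplit : ∑ p ∈ P, d p.2 ≤ X + s * s * n := by
    calc ∑ p ∈ P, d p.2 ≤ ∑ p ∈ P, ((d p.2 + 1 - s) + s) :=
          sum_le_sum fun p _ => by omega
      _ = X + P.card * s := by rw [sum_add_distrib, sum_const, smul_eq_mul]
      _ ≤ X + s * n * s := by gcongr
      _ = X + s * s * n := by ring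
  have hfin := hcount.trans hsplit
  have hfin' := (Nat.cast_le (α := ℝ)).2 hfin
  push_cast at hfin' hroot
  refine hfin'.trans ?_
  have hB : (0 : ℝ) ≤ (n : ℝ) ^ ((1 : ℝ) - 1 / s) * (S.card : ℝ) ^ ((1 : ℝ) / s) * W.card := by
    positivity
  have hn0 : (0 : ℝ) ≤ n := by positivity
  have h1 : (0 : ℝ) ≤ (s : ℝ) * s *
      ((n : ℝ) ^ ((1 : ℝ) - 1 / s) * (S.card : ℝ) ^ ((1 : ℝ) / s) * W.card) := by positivity
  have h2 : (0 : ℝ) ≤ (s : ℝ) * t * n := by positivity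
  linarith
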